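/- Let (Q, Σ) be a DFA with n = |Q| satisfying hypothesis (H), and suppose there exists a word w over Σ with |Qw| ≤ n − 3. Then there exists a word w over Σ with |w| ≤ 9 and |Qw| ≤ n − 3. -/

import Mathlib

/-- The image of a finite set of states `R` under a word (list of letters),
where each letter `s` acts on states via `act s`. -/
def wordImage {Q A : Type*} [DecidableEq Q] (act : A → Q → Q) (R : Finset Q) :
    List A → Finset Q
  | [] => R
  | s :: w => wordImage act (R.image (act s)) w

/-!
Call a set of states avoidable in `k` letters if the image of some word of length at most `k` misses
it. Under (H) no pair is avoidable in 3 letters, and this forces a rigid shape: there are states `p`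
and `q` such that every non-injective letter misses exactly `p` and merges exactly `p` with `q`,
every injective letter maps `p` into `{p, q}`, some injective letter maps `p` to `q`, and some
injective letter `σ` maps `q` to a state `r` outside `{p, q}`.

Suppose no triple is avoidable in 9 letters. Then every pair avoidable in 8 letters meets `{p, q}`,
since otherwise a non-injective letter would turn it into an avoidable triple. Let `T k` be the set
of states `t ≠ p` such that `{p, t}` is avoidable in `k` letters. An injective letter moving `p` to
`q` followed by one moving `q` out of `{p, q}` sends `T 6` into `{p, q}`, so `T 6` has at most two
elements. As `T 4` is nonempty, `T 4 = T 5` or `T 5 = T 6`. In either case `T 5` is mapped into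
itself by the letters that map each `T k` into `T (k + 1)`, namely the non-injective ones and the
injective ones fixing `p`. Since `r ∈ T 5`, following `σ` on `T 5` shows that `{p, q, r}` is closed
under every letter. All other states then survive every word, together with at least one of these
three, so no word reaches rank `n - 3`.
-/

open Finset Function

theorem mem_of_apply_mem_of_mapsTo {α : Type*} {f : α → α} {T U : Set α} (hT : T.Finite)
    (hTU : T ⊆ U) (hmaps : Set.MapsTo f T T) (hinj : Set.InjOn f U) {z : α} (hz : z ∈ U)
    (hfz : f z ∈ T) : z ∈ T := by
  have himage : f '' T = T :=
    Set.eq_of_subset_of_ncard_le hmaps.image_subset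
      (hinj.mono hTU).ncard_image.ge hT
  rw [← himage] at hfz
  obtain ⟨t, ht, htz⟩ := hfz
  exact hinj (hTU ht) hz htz ▸ ht

section WordImage

variable {Q A : Type*} [DecidableEq Q] (act : A → Q → Q)

theorem wordImage_append (R : Finset Q) (v w : List A) :
    wordImage act R (v ++ w) = wordImage act (wordImage act R v) w := by
  induction v generalizing R with
  | nil => rfl
  | cons _ _ ih => exact ih _

variable {act}

theorem exists_subset_wordImage {ι : Type*} {F : ι → Finset Q}
    (hF : ∀ i s, ∃ j, F j ⊆ (F i).image (act s)) {R : Finset Q} (hR : ∃ i, F i ⊆ R) (w : List A) :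
    ∃ j, F j ⊆ wordImage act R w := by
  induction w generalizing R with
  | nil => exact hR
  | cons s w ih =>
    obtain ⟨i, hi⟩ := hR
    obtain ⟨j, hj⟩ := hF i s
    exact ih ⟨j, hj.trans (image_subset_image hi)⟩

theorem wordImage_nonempty {R : Finset Q} (hR : R.Nonempty) (w : List A) :
    (wordImage act R w).Nonempty := by
  obtain ⟨x, hx⟩ := hR
  obtain ⟨y, hy⟩ := exists_subset_wordImage (act := act) (F := fun x : Q ↦ {x})
    (fun x s ↦ ⟨act s x, by simp⟩) ⟨x, by simpa using hx⟩ w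
  exact ⟨y, singleton_subset_iff.1 hy⟩

variable [Fintype Q]

theorem exists_not_injective_of_card_wordImage_lt {w : List A}
    (hw : (wordImage act univ w).card < Fintype.card Q) : ∃ s, ¬ Injective (act s) := by
  by_contra! hinj
  obtain ⟨-, huniv⟩ := exists_subset_wordImage (act := act) (F := fun _ : Unit ↦ univ)
    (fun i s ↦ ⟨i, (image_univ_of_surjective (Finite.injective_iff_surjective.1 (hinj s))).ge⟩)
    ⟨(), Subset.rfl⟩ w
  exact hw.not_ge (card_le_card huniv)

theorem card_lt_card_wordImage_add_card_of_closed {S : Finset Q} (hS : S.Nonempty)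
    (hmaps : ∀ s, ∀ z ∈ S, act s z ∈ S) (hsurj : ∀ s, ∀ y ∉ S, ∃ z, act s z = y) (w : List A) :
    Fintype.card Q < (wordImage act univ w).card + S.card := by
  have hstep (z : S) (s : A) :
      ∃ z' : S, insert (z' : Q) Sᶜ ⊆ (insert (z : Q) Sᶜ).image (act s) := by
    refine ⟨⟨act s z, hmaps s z z.2⟩, ?_⟩
    rw [image_insert]
    refine insert_subset_insert _ fun y hy ↦ ?_
    obtain ⟨u, rfl⟩ := hsurj s y (mem_compl.1 hy)
    exact mem_image_of_mem _ (mem_compl.2 fun hu ↦ mem_compl.1 hy (hmaps s u hu))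
  obtain ⟨z₀, hz₀⟩ := hS
  obtain ⟨z, hzw⟩ := exists_subset_wordImage hstep ⟨⟨z₀, hz₀⟩, subset_univ _⟩ w
  have hle := card_le_card hzw
  rw [card_insert_of_notMem (by simp)] at hle
  have := card_add_card_compl S
  omega

end WordImage

/-- `f` is a defect-one map: it misses exactly `x`, and the only two distinct states it identifies
are `p` and `q`. Given `f p = f q`, the latter amounts to injectivity off `p`. -/
structure IsDefect {Q : Type*} (f : Q → Q) (x p q : Q) : Prop where
  range_eq : Set.range f = {x}ᶜ
  ne : p ≠ q
  map_eq : f p = f q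
  injOn : Set.InjOn f {p}ᶜ

namespace IsDefect

variable {Q : Type*} {f : Q → Q} {x p q : Q}

theorem apply_ne (h : IsDefect f x p q) (z : Q) : f z ≠ x :=
  h.range_eq.subset ⟨z, rfl⟩

theorem exists_apply_eq (h : IsDefect f x p q) {y : Q} (hy : y ≠ x) : ∃ z, f z = y :=
  h.range_eq.superset hy

theorem eq_or_mem_pair [DecidableEq Q] (h : IsDefect f x p q) {u v : Q} (huv : f u = f v) :
    u = v ∨ u ∈ ({p, q} : Finset Q) ∧ v ∈ ({p, q} : Finset Q) := by
  have hinj : ∀ {u v}, u ≠ p → v ≠ p → f u = f v → u = v := fun hu hv ↦ h.injOn hu hv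
  have := h.ne
  have := h.map_eq
  grind

theorem symm (h : IsDefect f x p q) : IsDefect f x q p := by
  classical
  refine ⟨h.range_eq, h.ne.symm, h.map_eq.symm, fun u hu v hv huv ↦ ?_⟩
  have := h.eq_or_mem_pair huv
  grind

theorem exists_ne_apply_eq [DecidableEq Q] (h : IsDefect f x p q) {y z : Q}
    (hy : y ∈ ({p, q} : Finset Q)) (hz : z ≠ x) : ∃ u ≠ y, f u = z := by
  obtain ⟨u, hu⟩ := h.exists_apply_eq hz
  have := h.ne
  have := h.map_eq
  grind

theorem card_insert_image [DecidableEq Q] (h : IsDefect f x p q) {D : Finset Q} (hD : p ∉ D) :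
    (insert x (D.image f)).card = D.card + 1 := by
  rw [card_insert_of_notMem (by simpa using fun z _ ↦ h.apply_ne z),
    card_image_of_injOn (h.injOn.mono fun z hz ↦ ne_of_mem_of_not_mem hz hD)]

end IsDefect

theorem exists_isDefect {Q : Type*} [Finite Q] {f : Q → Q} (hf : ¬ Injective f)
    (hrange : (Set.range f)ᶜ.Subsingleton) : ∃ x p q, IsDefect f x p q := by
  classical
  have := Fintype.ofFinite Q
  obtain ⟨p, q, hpq, hne⟩ := not_injective_iff.1 hf
  obtain ⟨x, hx⟩ : ∃ x, x ∉ Set.range f := by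
    simpa [Surjective] using mt Finite.injective_iff_surjective.2 hf
  have hrange_eq : Set.range f = {x}ᶜ :=
    eq_compl_comm.1 (hrange.eq_singleton_of_mem hx).symm
  have himage : (univ.erase p).image f = univ.erase x := by
    ext y
    have hy : (∃ z, f z = y) ↔ y ≠ x := Set.ext_iff.1 hrange_eq y
    grind
  have hinj : Set.InjOn f (univ.erase p : Finset Q) :=
    injOn_of_card_image_eq (by rw [himage, card_erase_of_mem (mem_univ _),
      card_erase_of_mem (mem_univ _)])
  exact ⟨x, p, q, hrange_eq, hne, hpq, hinj.mono (by simp [Set.subset_def])⟩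

theorem card_le_card_wordImage_add_one {Q A : Type*} [Fintype Q] [DecidableEq Q]
    {act : A → Q → Q} {M : Finset Q} (hM : M.Nonempty)
    (hinj : ∀ s, Injective (act s) → ∀ x ∈ M, act s x ∈ M)
    (hdef : ∀ s, ¬ Injective (act s) → ∃ x ∈ M, ∃ u v, IsDefect (act s) x u v ∧ M ⊆ {u, v})
    (w : List A) : Fintype.card Q ≤ (wordImage act univ w).card + 1 := by
  have hstep (x : M) (s : A) : ∃ y : M, ({(y : Q)}ᶜ : Finset Q) ⊆ image (act s) {(x : Q)}ᶜ := by
    by_cases hs : Injective (act s)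
    · refine ⟨⟨act s x, hinj s hs x x.2⟩, fun z hz ↦ ?_⟩
      obtain ⟨u, rfl⟩ := Finite.injective_iff_surjective.1 hs z
      have hux : u ≠ x := by rintro rfl; simp at hz
      exact mem_image_of_mem _ (by simpa using hux)
    · obtain ⟨y, hy, u, v, hd, hMuv⟩ := hdef s hs
      refine ⟨⟨y, hy⟩, fun z hz ↦ ?_⟩
      obtain ⟨t, ht, rfl⟩ := hd.exists_ne_apply_eq (hMuv x.2) (by simpa using hz)
      exact mem_image_of_mem _ (by simpa using ht)
  obtain ⟨x₀, hx₀⟩ := hM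
  obtain ⟨x, hxw⟩ := exists_subset_wordImage hstep ⟨⟨x₀, hx₀⟩, subset_univ _⟩ w
  have hle := card_le_card hxw
  rw [card_compl, card_singleton] at hle
  omega

/-- The set `D` of states is missed by the image of some word of length at most `k`. -/
def AvoidableWithin {Q A : Type*} [Fintype Q] [DecidableEq Q] (act : A → Q → Q) (k : ℕ)
    (D : Finset Q) : Prop :=
  ∃ w : List A, w.length ≤ k ∧ Disjoint D (wordImage act univ w)

namespace AvoidableWithin

variable {Q A : Type*} [Fintype Q] [DecidableEq Q] {act : A → Q → Q} {k l : ℕ} {D E : Finset Q}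
  {s : A}

variable (act) in
theorem empty : AvoidableWithin act 0 ∅ :=
  ⟨[], le_rfl, disjoint_empty_left _⟩

theorem mono (h : AvoidableWithin act k D) (hkl : k ≤ l) (hED : E ⊆ D) : AvoidableWithin act l E :=
  let ⟨w, hw, hD⟩ := h
  ⟨w, hw.trans hkl, disjoint_of_subset_left hED hD⟩

theorem of_preimage_subset (h : AvoidableWithin act k D) (hE : ∀ z, act s z ∈ E → z ∈ D) :
    AvoidableWithin act (k + 1) E := by
  obtain ⟨w, hw, hD⟩ := h
  refine ⟨w ++ [s], by simpa using hw, disjoint_left.2 fun y hy hyw ↦ ?_⟩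
  rw [wordImage_append] at hyw
  obtain ⟨z, hz, rfl⟩ := mem_image.1 hyw
  exact disjoint_left.1 hD (hE z hy) hz

theorem image (h : AvoidableWithin act k D) (hs : Injective (act s)) :
    AvoidableWithin act (k + 1) (D.image (act s)) :=
  h.of_preimage_subset fun _ hz ↦ hs.mem_finset_image.1 hz

theorem image_pair {x y : Q} (h : AvoidableWithin act k {x, y}) (hs : Injective (act s)) :
    AvoidableWithin act (k + 1) {act s x, act s y} := by
  simpa [image_insert] using h.image hs

theorem insert_image {x p q : Q} (h : AvoidableWithin act k D) (hs : IsDefect (act s) x p q)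
    (hD : p ∈ D ↔ q ∈ D) : AvoidableWithin act (k + 1) (insert x (D.image (act s))) := by
  refine h.of_preimage_subset (s := s) fun z hz ↦ ?_
  obtain ⟨y, hy, hyz⟩ := mem_image.1 (mem_of_mem_insert_of_ne hz (hs.apply_ne z))
  have := hs.eq_or_mem_pair hyz
  grind

theorem card_le {m : ℕ} (h : AvoidableWithin act k D)
    (hw : ∀ w : List A, w.length ≤ k → Fintype.card Q - (m + 1) < (wordImage act univ w).card) :
    D.card ≤ m := by
  obtain ⟨w, hwk, hD⟩ := h
  have hlt := hw w hwk
  have hle := card_le_univ (D ∪ wordImage act univ w)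
  rw [card_union_of_disjoint hD] at hle
  omega

end AvoidableWithin

section CriticalPair

variable {Q A : Type*} [Fintype Q] [DecidableEq Q] {act : A → Q → Q}

theorem IsDefect.avoidableWithin_one {s : A} {x u v : Q} (hd : IsDefect (act s) x u v) :
    AvoidableWithin act 1 {x} := by
  simpa using (AvoidableWithin.empty act).insert_image hd (by simp)

theorem IsDefect.exists_mem_pair_of_card_le {k : ℕ} {s : A} {x u v : Q} {D : Finset Q}
    (hd : IsDefect (act s) x u v) (hD : AvoidableWithin act k D)
    (hmax : ∀ E, AvoidableWithin act (k + 1) E → E.card ≤ D.card) :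
    ∃ y ∈ D, y ∈ ({u, v} : Finset Q) := by
  by_contra! hdisj
  have hcard := hmax _ (hD.insert_image hd (by grind))
  rw [hd.card_insert_image (by grind)] at hcard
  omega

theorem IsDefect.mem_pair_of_avoidableWithin {k : ℕ} {s : A} {x u v y : Q}
    (hd : IsDefect (act s) x u v) (hmax : ∀ D, AvoidableWithin act (k + 1) D → D.card ≤ 1)
    (hy : AvoidableWithin act k {y}) : y ∈ ({u, v} : Finset Q) := by
  simpa using hd.exists_mem_pair_of_card_le hy (by simpa using hmax)

theorem exists_isDefect_of_card_le_one {k : ℕ} {s : A} (hs : ¬ Injective (act s))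
    (hmax : ∀ D, AvoidableWithin act (k + 1) D → D.card ≤ 1) :
    ∃ x u v, IsDefect (act s) x u v := by
  refine exists_isDefect hs fun x hx y hy ↦ ?_
  have havoid : AvoidableWithin act 1 {x, y} :=
    (AvoidableWithin.empty act).of_preimage_subset (s := s) (by grind)
  exact card_le_one.1 (hmax _ (havoid.mono (by simp) Subset.rfl)) x (by simp) y (by simp)

theorem exists_injective_not_avoidableWithin_one
    (hmax : ∀ D, AvoidableWithin act 2 D → D.card ≤ 1) {w : List A}
    (hw : (wordImage act univ w).card + 1 < Fintype.card Q) :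
    ∃ p s, AvoidableWithin act 1 {p} ∧ Injective (act s) ∧ ¬ AvoidableWithin act 1 {act s p} := by
  classical
  obtain ⟨a, ha⟩ := exists_not_injective_of_card_wordImage_lt (Nat.lt_of_succ_lt hw)
  obtain ⟨x, u, v, hd⟩ := exists_isDefect_of_card_le_one ha hmax
  by_contra! hclosed
  have hrank := card_le_card_wordImage_add_one (act := act)
    (M := {y | AvoidableWithin act 1 {y}}) ⟨x, by simpa using hd.avoidableWithin_one⟩
    (by simpa using fun s hs y hy ↦ hclosed y s hy hs)
    (fun s hs ↦ by
      obtain ⟨x, u, v, hd⟩ := exists_isDefect_of_card_le_one hs hmax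
      exact ⟨x, by simpa using hd.avoidableWithin_one, u, v, hd, fun y hy ↦
        hd.mem_pair_of_avoidableWithin hmax (mem_filter.1 hy).2⟩) w
  omega

/-- The shape that hypothesis (H) forces on an automaton: all non-injective letters miss `p` and
merge `p` with `q`, while injective letters may move `p` only to `q`; moreover some injective letter
does so, and some injective letter moves `q` out of `{p, q}`. -/
structure IsCriticalPair (act : A → Q → Q) (p q : Q) : Prop where
  isDefect : ∀ {s}, ¬ Injective (act s) → IsDefect (act s) p p q
  apply_left_mem : ∀ {s}, Injective (act s) → act s p ∈ ({p, q} : Finset Q)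
  exists_not_injective : ∃ s, ¬ Injective (act s)
  exists_apply_left : ∃ s, Injective (act s) ∧ act s p = q
  exists_apply_right_notMem : ∃ s, Injective (act s) ∧ act s q ∉ ({p, q} : Finset Q)

theorem exists_isCriticalPair (hmax : ∀ D, AvoidableWithin act 3 D → D.card ≤ 1)
    (hrank : ∃ w : List A, (wordImage act univ w).card + 1 < Fintype.card Q) :
    ∃ p q, IsCriticalPair act p q := by
  obtain ⟨w, hw⟩ := hrank
  obtain ⟨p, π, hp, hπ, hq⟩ := exists_injective_not_avoidableWithin_one
    (fun D hD ↦ hmax D (hD.mono (by simp) Subset.rfl)) hw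
  have hinj {s} (hs : Injective (act s)) : AvoidableWithin act 2 {act s p} := by
    simpa using hp.image hs
  have hdefect {s} (hs : ¬ Injective (act s)) : IsDefect (act s) p p (act π p) := by
    obtain ⟨x, u, v, hd⟩ := exists_isDefect_of_card_le_one hs hmax
    have hx := hd.avoidableWithin_one
    have hpuv := hd.mem_pair_of_avoidableWithin hmax (hp.mono (by simp) Subset.rfl)
    have hquv := hd.mem_pair_of_avoidableWithin hmax (hinj hπ)
    have hd' : IsDefect (act s) x p (act π p) := by
      have := hd.symm
      grind
    have := hd'.mem_pair_of_avoidableWithin hmax (hx.mono (by simp) Subset.rfl)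
    grind
  obtain ⟨a, ha⟩ := exists_not_injective_of_card_wordImage_lt (Nat.lt_of_succ_lt hw)
  have hleft {s} (hs : Injective (act s)) : act s p ∈ ({p, act π p} : Finset Q) :=
    (hdefect ha).mem_pair_of_avoidableWithin hmax (hinj hs)
  refine ⟨p, act π p, hdefect, hleft, ⟨a, ha⟩, ⟨π, hπ, rfl⟩, ?_⟩
  by_contra! hright
  have := card_le_card_wordImage_add_one (act := act) (M := {p, act π p}) (by simp)
    (by simpa using fun s hs ↦ ⟨by simpa using hleft hs, by simpa using hright s hs⟩)
    (fun s hs ↦ ⟨p, by simp, p, _, hdefect hs, Subset.rfl⟩) w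
  omega

/-- The states that can be avoided together with `p` by a word of length at most `k`. -/
def companions (act : A → Q → Q) (p : Q) (k : ℕ) : Set Q :=
  {t | t ≠ p ∧ AvoidableWithin act k {p, t}}

theorem companions_mono {p : Q} {k l : ℕ} (hkl : k ≤ l) : companions act p k ⊆ companions act p l :=
  fun _ ht ↦ ⟨ht.1, ht.2.mono hkl Subset.rfl⟩

theorem mapsTo_companions_of_apply_eq {p : Q} {s : A} (hs : Injective (act s)) (hp : act s p = p)
    (k : ℕ) : Set.MapsTo (act s) (companions act p k) (companions act p (k + 1)) := by
  rintro t ⟨htp, ht⟩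
  have := ht.image_pair hs
  rw [hp] at this
  exact ⟨fun h ↦ htp (hs (h.trans hp.symm)), this⟩

namespace IsCriticalPair

variable {p q : Q} {k : ℕ} {s a π σ : A}

theorem mem_pair_or_mem_pair (h : IsCriticalPair act p q)
    (hmax : ∀ D, AvoidableWithin act (k + 1) D → D.card ≤ 2) {x y : Q} (hxy : x ≠ y)
    (hD : AvoidableWithin act k {x, y}) :
    x ∈ ({p, q} : Finset Q) ∨ y ∈ ({p, q} : Finset Q) := by
  obtain ⟨a, ha⟩ := h.exists_not_injective
  have := (h.isDefect ha).exists_mem_pair_of_card_le hD (by simpa [card_pair hxy] using hmax)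
  grind

theorem avoidableWithin_apply_right (h : IsCriticalPair act p q) (hs : Injective (act s)) :
    AvoidableWithin act 3 {act s q} := by
  obtain ⟨a, ha⟩ := h.exists_not_injective
  obtain ⟨π, hπ, hπp⟩ := h.exists_apply_left
  have hq : AvoidableWithin act 2 {q} := by
    simpa [hπp] using (h.isDefect ha).avoidableWithin_one.image hπ
  simpa using hq.image hs

theorem apply_mem_companions (h : IsCriticalPair act p q) (ha : ¬ Injective (act a)) {z : Q}
    (hz : z ∉ ({p, q} : Finset Q)) (hD : AvoidableWithin act k {z}) :
    act a z ∈ companions act p (k + 1) :=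
  ⟨(h.isDefect ha).apply_ne z, by simpa using hD.insert_image (h.isDefect ha) (by grind)⟩

theorem apply_mem_companions_of_pair (h : IsCriticalPair act p q) (ha : ¬ Injective (act a))
    {x t : Q} (hx : x ∈ ({p, q} : Finset Q)) (hxt : x ≠ t) (hD : AvoidableWithin act k {x, t}) :
    act a t ∈ companions act p (k + 1) := by
  by_cases ht : t ∈ ({p, q} : Finset Q)
  · have hxt' : AvoidableWithin act (k + 1) (insert p (({x, t} : Finset Q).image (act a))) :=
      hD.insert_image (h.isDefect ha) (by grind)
    exact ⟨(h.isDefect ha).apply_ne t, hxt'.mono le_rfl (by grind)⟩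
  · exact h.apply_mem_companions ha ht (hD.mono le_rfl (by simp))

theorem mapsTo_companions_of_not_injective (h : IsCriticalPair act p q) (ha : ¬ Injective (act a))
    (k : ℕ) : Set.MapsTo (act a) (companions act p k) (companions act p (k + 1)) :=
  fun _ ht ↦ h.apply_mem_companions_of_pair ha (by simp) ht.1.symm ht.2

theorem apply_apply_mem_pair (h : IsCriticalPair act p q)
    (hmax : ∀ D, AvoidableWithin act (k + 3) D → D.card ≤ 2) (hπ : Injective (act π))
    (hπp : act π p = q) (hσ : Injective (act σ)) (hσq : act σ q ∉ ({p, q} : Finset Q)) {t : Q}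
    (ht : t ∈ companions act p k) : act σ (act π t) ∈ ({p, q} : Finset Q) := by
  have hD := (ht.2.image_pair hπ).image_pair hσ
  rw [hπp] at hD
  have hne : act σ q ≠ act σ (act π t) := fun heq ↦ ht.1 (hπ (hσ (hπp ▸ heq))).symm
  exact (h.mem_pair_or_mem_pair hmax hne hD).resolve_left hσq

theorem ncard_companions_le_two (h : IsCriticalPair act p q)
    (hmax : ∀ D, AvoidableWithin act (k + 3) D → D.card ≤ 2) :
    (companions act p k).ncard ≤ 2 := by
  obtain ⟨π, hπ, hπp⟩ := h.exists_apply_left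
  obtain ⟨σ, hσ, hσq⟩ := h.exists_apply_right_notMem
  have hle := Set.ncard_le_ncard_of_injOn (s := companions act p k)
    (t := (({p, q} : Finset Q) : Set Q)) (act σ ∘ act π)
    (fun t ht ↦ h.apply_apply_mem_pair hmax hπ hπp hσ hσq ht) (hσ.comp hπ).injOn
  rw [Set.ncard_coe_finset] at hle
  exact hle.trans card_le_two

theorem companions_four_nonempty (h : IsCriticalPair act p q) :
    (companions act p 4).Nonempty := by
  obtain ⟨a, ha⟩ := h.exists_not_injective
  obtain ⟨σ, hσ, hσq⟩ := h.exists_apply_right_notMem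
  exact ⟨_, h.apply_mem_companions ha hσq (h.avoidableWithin_apply_right hσ)⟩

section

variable (h : IsCriticalPair act p q) (hmax : ∀ D, AvoidableWithin act 9 D → D.card ≤ 2)

include h hmax

theorem companions_four_eq_or_five_eq :
    companions act p 4 = companions act p 5 ∨ companions act p 5 = companions act p 6 := by
  by_contra! hne
  have h45 := Set.ncard_lt_ncard ((companions_mono (by simp)).ssubset_of_ne hne.1)
  have h56 := Set.ncard_lt_ncard ((companions_mono (by simp)).ssubset_of_ne hne.2)
  have h4 := h.companions_four_nonempty.ncard_pos
  have h6 := h.ncard_companions_le_two (k := 6) hmax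
  omega

theorem mapsTo_companions_five {g : Q → Q}
    (hg : ∀ k, Set.MapsTo g (companions act p k) (companions act p (k + 1))) :
    Set.MapsTo g (companions act p 5) (companions act p 5) := by
  rcases h.companions_four_eq_or_five_eq hmax with heq | heq
  · exact heq ▸ hg 4
  · exact fun t ht ↦ heq ▸ hg 5 ht

-- A non-injective letter permutes the companions, so a state it sends among them lies among them.
theorem mem_companions_five {z : Q} (hz : z ∉ ({p, q} : Finset Q))
    (hD : AvoidableWithin act 4 {z}) : z ∈ companions act p 5 := by
  obtain ⟨a, ha⟩ := h.exists_not_injective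
  exact mem_of_apply_mem_of_mapsTo (Set.toFinite _) (fun t ht ↦ ht.1)
    (h.mapsTo_companions_five hmax (h.mapsTo_companions_of_not_injective ha))
    (h.isDefect ha).injOn (show z ≠ p by grind) (h.apply_mem_companions ha hz hD)

variable (hσ : Injective (act σ)) (hσq : act σ q ∉ ({p, q} : Finset Q))
include hσ hσq

theorem apply_right_mem_companions : act σ q ∈ companions act p 5 :=
  h.mem_companions_five hmax hσq ((h.avoidableWithin_apply_right hσ).mono (by simp) Subset.rfl)

theorem companions_eq_of_apply_left_eq (hσp : act σ p = p) :
    companions act p 5 = {q, act σ q} := by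
  have hr := h.apply_right_mem_companions hmax hσ hσq
  have hq : q ∈ companions act p 5 :=
    mem_of_apply_mem_of_mapsTo (Set.toFinite _) (Set.subset_univ _)
      (h.mapsTo_companions_five hmax (mapsTo_companions_of_apply_eq hσ hσp)) hσ.injOn
      (Set.mem_univ _) hr
  refine (Set.eq_of_subset_of_ncard_le (Set.pair_subset hq hr) ?_).symm
  rw [Set.ncard_pair (by grind)]
  exact (Set.ncard_le_ncard (companions_mono (by simp))).trans (h.ncard_companions_le_two hmax)

theorem apply_apply_right_eq_left (hσp : act σ p = q) : act σ (act σ q) = p := by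
  by_contra hne
  set r := act σ q with hr
  set t := act σ r with ht
  have hrT : r ∈ companions act p 5 := h.apply_right_mem_companions hmax hσ hσq
  have htq : t ≠ q := fun heq ↦ hrT.1 (hσ (heq.trans hσp.symm))
  have htT : t ∈ companions act p 5 :=
    h.mem_companions_five hmax (by grind)
      (by simpa using (h.avoidableWithin_apply_right hσ).image hσ)
  have hσt : act σ t = p := by
    have := h.apply_apply_mem_pair hmax hσ hσp hσ hσq (companions_mono (by simp) hrT)
    have : act σ t ≠ q := fun heq ↦ htT.1 (hσ (heq.trans hσp.symm))
    grind
  -- `σ` is the cycle `p → q → r → t → p` here, and it carries `{p, t}` to `{t, r}` in three steps.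
  have havoid : AvoidableWithin act 8 {t, r} := by
    simpa only [hσp, hσt, ← hr, ← ht] using ((htT.2.image_pair hσ).image_pair hσ).image_pair hσ
  have htr : t ≠ r := fun heq ↦ by
    have := hσ heq
    grind
  have := h.mem_pair_or_mem_pair hmax htr havoid
  grind

theorem apply_apply_right_mem_pair : act σ (act σ q) ∈ ({p, q} : Finset Q) := by
  rcases mem_insert.1 (h.apply_left_mem hσ) with hσp | hσp
  · have heq := h.companions_eq_of_apply_left_eq hmax hσ hσq hσp
    have hmem := h.mapsTo_companions_five hmax (mapsTo_companions_of_apply_eq hσ hσp)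
      (h.apply_right_mem_companions hmax hσ hσq)
    have hne : act σ (act σ q) ≠ act σ q := fun heq ↦ hσq (by simp [hσ heq])
    rw [heq] at hmem
    grind
  · simp [h.apply_apply_right_eq_left hmax hσ hσq (mem_singleton.1 hσp)]

theorem companions_subset : companions act p 5 ⊆ {q, act σ q} := by
  rcases mem_insert.1 (h.apply_left_mem hσ) with hσp | hσp
  · exact (h.companions_eq_of_apply_left_eq hmax hσ hσq hσp).subset
  · replace hσp := mem_singleton.1 hσp
    have hσr := h.apply_apply_right_eq_left hmax hσ hσq hσp
    intro t ht
    have hσσt := h.apply_apply_mem_pair hmax hσ hσp hσ hσq (companions_mono (by simp) ht)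
    have hinj {y : Q} (hy : act σ (act σ t) = act σ (act σ y)) : t = y := hσ (hσ hy)
    grind

theorem eq_or_eq_of_apply_mem_pair {y : Q} (hy : act σ y ∈ ({p, q} : Finset Q)) :
    y = p ∨ y = act σ q := by
  have hp := h.apply_left_mem hσ
  have hr := h.apply_apply_right_mem_pair hmax hσ hσq
  have hne : act σ p ≠ act σ (act σ q) := fun heq ↦ hσq (by simp [← hσ heq])
  have hinj {z : Q} (hz : act σ y = act σ z) : y = z := hσ hz
  grind

theorem apply_mem_triple_of_injective (hs : Injective (act s)) :
    ∀ z ∈ ({p, q, act σ q} : Finset Q), act s z ∈ ({p, q, act σ q} : Finset Q) := by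
  have hsub := h.companions_subset hmax hσ hσq
  have hr := h.apply_right_mem_companions hmax hσ hσq
  have hp := h.apply_left_mem hs
  have hsq : act s q ∈ ({p, q, act σ q} : Finset Q) := by
    by_cases hsq : act s q ∈ ({p, q} : Finset Q)
    · grind
    · simpa using Or.inr (hsub (h.apply_right_mem_companions hmax hs hsq))
  have hsr : act s (act σ q) ∈ ({p, q, act σ q} : Finset Q) := by
    rcases mem_insert.1 hp with hsp | hsp
    · simpa using Or.inr (hsub
        (h.mapsTo_companions_five hmax (mapsTo_companions_of_apply_eq hs hsp) hr))
    · have := h.eq_or_eq_of_apply_mem_pair hmax hσ hσq (h.apply_apply_mem_pair hmax hs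
        (mem_singleton.1 hsp) hσ hσq (companions_mono (by simp) hr))
      grind
  grind

theorem apply_right_mem_of_not_injective (ha : ¬ Injective (act a)) :
    act a q = q ∨ act a q = act σ q := by
  have hsub := h.companions_subset hmax hσ hσq
  have hmaps := h.mapsTo_companions_five hmax (h.mapsTo_companions_of_not_injective ha)
  by_cases hq : q ∈ companions act p 5
  · exact hsub (hmaps hq)
  have hσp : act σ p = q := by
    refine (mem_insert.1 (h.apply_left_mem hσ)).elim (fun hσp ↦ absurd ?_ hq) mem_singleton.1
    simp [h.companions_eq_of_apply_left_eq hmax hσ hσq hσp]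
  have hσr := h.apply_apply_right_eq_left hmax hσ hσq hσp
  have hr : act σ q ∈ companions act p 4 := by
    obtain ⟨t, ht⟩ := h.companions_four_nonempty
    have ht₅ := companions_mono (by simp : 4 ≤ 5) ht
    rcases hsub ht₅ with rfl | rfl
    · exact absurd ht₅ hq
    · exact ht
  have hqp : AvoidableWithin act 5 {q, p} := by
    simpa only [hσp, hσr] using hr.2.image_pair hσ
  have haq : act a q ∈ companions act p 6 := by
    rw [← (h.isDefect ha).map_eq]
    exact h.apply_mem_companions_of_pair ha (by simp) (h.isDefect ha).ne.symm hqp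
  have hσaq := h.eq_or_eq_of_apply_mem_pair hmax hσ hσq
    (h.apply_apply_mem_pair hmax hσ hσp hσ hσq haq)
  have hinj {z : Q} (hz : act σ (act a q) = act σ z) : act a q = z := hσ hz
  grind

theorem apply_mem_triple_of_not_injective (ha : ¬ Injective (act a)) :
    ∀ z ∈ ({p, q, act σ q} : Finset Q), act a z ∈ ({p, q, act σ q} : Finset Q) := by
  have haq := h.apply_right_mem_of_not_injective hmax hσ hσq ha
  have har := h.companions_subset hmax hσ hσq <|
    h.mapsTo_companions_five hmax (h.mapsTo_companions_of_not_injective ha)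
      (h.apply_right_mem_companions hmax hσ hσq)
  have hap := (h.isDefect ha).map_eq
  grind

end

theorem card_lt_card_wordImage_add_three (h : IsCriticalPair act p q)
    (hmax : ∀ D, AvoidableWithin act 9 D → D.card ≤ 2) (w : List A) :
    Fintype.card Q < (wordImage act univ w).card + 3 := by
  obtain ⟨σ, hσ, hσq⟩ := h.exists_apply_right_notMem
  have hmaps (s : A) :
      ∀ z ∈ ({p, q, act σ q} : Finset Q), act s z ∈ ({p, q, act σ q} : Finset Q) := by
    by_cases hs : Injective (act s)
    · exact h.apply_mem_triple_of_injective hmax hσ hσq hs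
    · exact h.apply_mem_triple_of_not_injective hmax hσ hσq hs
  have hsurj (s : A) (y : Q) (hy : y ∉ ({p, q, act σ q} : Finset Q)) : ∃ z, act s z = y := by
    by_cases hs : Injective (act s)
    · exact Finite.injective_iff_surjective.1 hs y
    · exact (h.isDefect hs).exists_apply_eq (by grind)
  exact (card_lt_card_wordImage_add_card_of_closed (by simp) hmaps hsurj w).trans_le
    (Nat.add_le_add_left card_le_three _)

end IsCriticalPair

end CriticalPair

theorem stmt_9 {Q A : Type*} [Fintype Q] [DecidableEq Q] (act : A → Q → Q)
    (hH1 : ∃ w : List A, (wordImage act Finset.univ w).card ≤ Fintype.card Q - 2)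
    (hH2 : ∀ w : List A, w.length ≤ 3 →
      Fintype.card Q - 2 < (wordImage act Finset.univ w).card)
    (h3 : ∃ w : List A, (wordImage act Finset.univ w).card ≤ Fintype.card Q - 3) :
    ∃ w : List A, w.length ≤ 9 ∧
      (wordImage act Finset.univ w).card ≤ Fintype.card Q - 3 := by
  obtain ⟨w, hw⟩ := h3
  have huniv : (univ : Finset Q).Nonempty := card_pos.1 (Nat.zero_lt_of_lt (hH2 [] (by simp)))
  have hpos := (wordImage_nonempty (act := act) huniv w).card_pos
  obtain ⟨p, q, hpq⟩ : ∃ p q, IsCriticalPair act p q :=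
    exists_isCriticalPair (fun D hD ↦ hD.card_le hH2) ⟨w, by omega⟩
  by_contra! hmax
  have := hpq.card_lt_card_wordImage_add_three (fun D hD ↦ hD.card_le hmax) w
  omega
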